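/- Assume in addition that κ₁(s) = 0 for all s ∈ I (developable case), and define A_k(s) = ⟪σ^{(k)}(s), v₀(s)⟫, B_k(s) = ⟪σ^{(k)}(s), n₀(s)⟫, C_k(s) = ⟪σ^{(k)}(s), t₀(s)⟫ for k ≥ 1, where σ^{(k)} is the k-th derivative of the striction curve σ. Then A₁ = τ₁, B₁ = 0, C₁ = 0, and for every k ≥ 1 the recursion A_{k+1}(s) = A_k'(s) − B_k(s), B_{k+1}(s) = B_k'(s) + A_k(s) − τ₀(s)·C_k(s), C_{k+1}(s) = C_k'(s) + τ₀(s)·B_k(s) holds for all s ∈ I. -/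

import Mathlib

noncomputable section
open scoped RealInnerProductSpace

/-- Euclidean 3-space `ℝ³`. -/
abbrev E3 : Type := EuclideanSpace ℝ (Fin 3)

/-- The cross product on `E3`. -/
def cross (u v : E3) : E3 :=
  (WithLp.equiv 2 (Fin 3 → ℝ)).symm
    ![u 1 * v 2 - u 2 * v 1, u 2 * v 0 - u 0 * v 2, u 0 * v 1 - u 1 * v 0]

/-- Determinant of the 3×3 matrix with columns `u`, `v`, `w`. -/
def det3 (u v w : E3) : ℝ :=
  Matrix.det !![u 0, v 0, w 0; u 1, v 1, w 1; u 2, v 2, w 2]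

namespace Ruled

/-- The director curve `e = v₀`. -/
def e (v₀ : ℝ → E3) : ℝ → E3 := v₀

/-- The base curve `r = v₀ × v₁`. -/
def r (v₀ v₁ : ℝ → E3) : ℝ → E3 := fun s => cross (v₀ s) (v₁ s)

/-- The parametrization `F(s,t) = r(s) + t • e(s)` of the ruled surface. -/
def F (v₀ v₁ : ℝ → E3) (s t : ℝ) : E3 := r v₀ v₁ s + t • v₀ s

/-- `n₀ = v₀'`. -/
def n₀ (v₀ : ℝ → E3) : ℝ → E3 := fun s => deriv v₀ s

/-- `κ₁ = ⟪v₀', v₁'⟫`, the ε-part of the dual curvature. -/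
def κ₁ (v₀ v₁ : ℝ → E3) : ℝ → ℝ := fun s => ⟪deriv v₀ s, deriv v₁ s⟫

/-- `n₁ = v₁' - κ₁ • v₀'`. -/
def n₁ (v₀ v₁ : ℝ → E3) : ℝ → E3 := fun s => deriv v₁ s - κ₁ v₀ v₁ s • deriv v₀ s

/-- `t₀ = v₀ × n₀`. -/
def t₀ (v₀ : ℝ → E3) : ℝ → E3 := fun s => cross (v₀ s) (n₀ v₀ s)

/-- `t₁ = v₀ × n₁ + v₁ × n₀`. -/
def t₁ (v₀ v₁ : ℝ → E3) : ℝ → E3 :=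
  fun s => cross (v₀ s) (n₁ v₀ v₁ s) + cross (v₁ s) (n₀ v₀ s)

/-- `τ₀ = ⟪n₀', t₀⟫`, the real part of the dual torsion. -/
def τ₀ (v₀ : ℝ → E3) : ℝ → ℝ := fun s => ⟪deriv (n₀ v₀) s, t₀ v₀ s⟫

/-- `τ₁ = ⟪n₀', t₁⟫ + ⟪n₁', t₀⟫`, the ε-part of the dual torsion. -/
def τ₁ (v₀ v₁ : ℝ → E3) : ℝ → ℝ :=
  fun s => ⟪deriv (n₀ v₀) s, t₁ v₀ v₁ s⟫ + ⟪deriv (n₁ v₀ v₁) s, t₀ v₀ s⟫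

/-- The striction curve `σ(s) = r(s) - ⟪r'(s), e'(s)⟫ • e(s)`. -/
def strict (v₀ v₁ : ℝ → E3) : ℝ → E3 :=
  fun s => r v₀ v₁ s - ⟪deriv (r v₀ v₁) s, deriv (e v₀) s⟫ • e v₀ s

end Ruled

open Ruled

/-!
The frame `(v₀, n₀, t₀)` is orthonormal and satisfies the Frenet equations `v₀' = n₀`,
`n₀' = -v₀ + τ₀ t₀`, `t₀' = -τ₀ n₀`. For an arbitrary curve `γ` the product rule gives
`⟪γ', f⟫ = ⟪γ, f⟫' - ⟪γ, f'⟫`, and substituting the Frenet equations for `f = v₀, n₀, t₀` gives the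
recursion, with `γ = σ⁽ᵏ⁾`.

For the initial values, `r' = ⟪v₁, t₀⟫ v₀ - ⟪v₁', t₀⟫ n₀ + κ₁ t₀`, so `σ = r + ⟪v₁', t₀⟫ v₀`, and in
`σ'` the `n₀`-components cancel. What remains is `σ' = τ₁ v₀ + κ₁ t₀`, and `κ₁ = 0` in the
developable case.
-/

open scoped Topology Matrix

section Calculus

variable {F : Type*} [NormedAddCommGroup F] [InnerProductSpace ℝ F]

lemma inner_add_inner_eq_zero_of_eventually_inner_eq_const {f g : ℝ → F} {f' g' : F} {s c : ℝ}
    (hf : HasDerivAt f f' s) (hg : HasDerivAt g g' s) (hc : ∀ᶠ u in 𝓝 s, ⟪f u, g u⟫ = c) :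
    ⟪f s, g'⟫ + ⟪f', g s⟫ = 0 :=
  (hf.inner ℝ hg).unique ((hasDerivAt_const s c).congr_of_eventuallyEq hc)

lemma inner_eq_zero_of_eventually_norm_eq_const {f : ℝ → F} {f' : F} {s c : ℝ}
    (hf : HasDerivAt f f' s) (hc : ∀ᶠ u in 𝓝 s, ‖f u‖ = c) : ⟪f s, f'⟫ = 0 := by
  have hsq : ∀ᶠ u in 𝓝 s, ⟪f u, f u⟫ = c ^ 2 := hc.mono fun u hu => by
    rw [real_inner_self_eq_norm_sq, hu]
  have hsum := inner_add_inner_eq_zero_of_eventually_inner_eq_const hf hf hsq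
  rw [real_inner_comm (f s) f'] at hsum
  linarith

lemma inner_deriv_left_eq_deriv_inner_sub {γ f : ℝ → F} {f' : F} {s : ℝ}
    (hγ : DifferentiableAt ℝ γ s) (hf : HasDerivAt f f' s) :
    ⟪deriv γ s, f s⟫ = deriv (fun u => ⟪γ u, f u⟫) s - ⟪γ s, f'⟫ := by
  rw [(hγ.hasDerivAt.inner ℝ hf).deriv, add_sub_cancel_left]

lemma differentiableAt_iteratedDeriv_of_contDiffAt {𝕜 E : Type*} [NontriviallyNormedField 𝕜]
    [NormedAddCommGroup E] [NormedSpace 𝕜 E] {f : 𝕜 → E} {x : 𝕜} {n : WithTop ℕ∞} {m : ℕ}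
    (hf : ContDiffAt 𝕜 n f x) (hmn : m < n) : DifferentiableAt 𝕜 (iteratedDeriv m f) x := by
  rw [iteratedDeriv_eq_equiv_comp, LinearIsometryEquiv.comp_differentiableAt_iff]
  exact hf.differentiableAt_iteratedFDeriv hmn

end Calculus

lemma sum_inner_smul_of_orthonormal_of_card_eq_finrank {ι 𝕜 E : Type*} [Fintype ι]
    [Nonempty ι] [RCLike 𝕜] [NormedAddCommGroup E] [InnerProductSpace 𝕜 E] {b : ι → E}
    (hb : Orthonormal 𝕜 b) (hcard : Fintype.card ι = Module.finrank 𝕜 E) (x : E) :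
    ∑ i, inner 𝕜 (b i) x • b i = x := by
  have hspan := hb.linearIndependent.span_eq_top_of_card_eq_finrank hcard
  simpa using (OrthonormalBasis.mk hb hspan.ge).sum_repr' x

namespace E3

lemma inner_eq_dotProduct (u v : E3) : ⟪u, v⟫ = u.ofLp ⬝ᵥ v.ofLp := by
  simp [EuclideanSpace.inner_eq_star_dotProduct, dotProduct_comm]

lemma cross_eq_toLp_crossProduct (u v : E3) : cross u v = WithLp.toLp 2 (u.ofLp ⨯₃ v.ofLp) :=
  rfl

lemma cross_self (u : E3) : cross u u = 0 := by
  rw [cross_eq_toLp_crossProduct, _root_.cross_self, WithLp.toLp_zero]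

lemma inner_self_cross (u v : E3) : ⟪u, cross u v⟫ = 0 := by
  rw [inner_eq_dotProduct, cross_eq_toLp_crossProduct, dot_self_cross]

lemma inner_cross_self (u v : E3) : ⟪v, cross u v⟫ = 0 := by
  rw [inner_eq_dotProduct, cross_eq_toLp_crossProduct, dot_cross_self]

lemma inner_cross_rotate (u v w : E3) : ⟪u, cross v w⟫ = ⟪v, cross w u⟫ := by
  simp only [inner_eq_dotProduct, cross_eq_toLp_crossProduct]
  exact triple_product_permutation _ _ _

lemma inner_cross_cross (u v w x : E3) :
    ⟪cross u v, cross w x⟫ = ⟪u, w⟫ * ⟪v, x⟫ - ⟪u, x⟫ * ⟪v, w⟫ := by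
  simp only [inner_eq_dotProduct, cross_eq_toLp_crossProduct]
  exact cross_dot_cross _ _ _ _

lemma cross_cross_right (u v w : E3) : cross u (cross v w) = ⟪u, w⟫ • v - ⟪u, v⟫ • w := by
  rw [real_inner_comm v u]
  simp only [inner_eq_dotProduct, cross_eq_toLp_crossProduct, cross_cross_eq_smul_sub_smul',
    WithLp.toLp_sub, WithLp.toLp_smul]

lemma isBilinearMap_cross : IsBilinearMap ℝ cross where
  add_left u v w := by simp [cross_eq_toLp_crossProduct]
  smul_left c u v := by simp [cross_eq_toLp_crossProduct]
  add_right u v w := by simp [cross_eq_toLp_crossProduct]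
  smul_right c u v := by simp [cross_eq_toLp_crossProduct]

lemma cross_anticomm (u v : E3) : cross u v = -cross v u := by
  simp [cross_eq_toLp_crossProduct, ← WithLp.toLp_neg]

lemma hasDerivAt_cross {f g : ℝ → E3} {f' g' : E3} {s : ℝ}
    (hf : HasDerivAt f f' s) (hg : HasDerivAt g g' s) :
    HasDerivAt (fun u => cross (f u) (g u)) (cross (f s) g' + cross f' (g s)) s :=
  isBilinearMap_cross.toContinuousBilinearMap.hasDerivAt_of_bilinear (fun _ => hf) (fun _ => hg)

lemma contDiffAt_cross {E : Type*} [NormedAddCommGroup E] [NormedSpace ℝ E] {f g : E → E3} {x : E}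
    {n : WithTop ℕ∞} (hf : ContDiffAt ℝ n f x) (hg : ContDiffAt ℝ n g x) :
    ContDiffAt ℝ n (fun y => cross (f y) (g y)) x :=
  (isBilinearMap_cross.toContinuousBilinearMap.contDiff.contDiffAt.comp x hf).clm_apply hg

lemma norm_cross_of_orthonormal {u v : E3} (hu : ‖u‖ = 1) (hv : ‖v‖ = 1) (huv : ⟪u, v⟫ = 0) :
    ‖cross u v‖ = 1 := by
  rw [norm_eq_sqrt_real_inner, inner_cross_cross]
  simp [hu, hv, huv]

lemma orthonormal_cross {u v : E3} (hu : ‖u‖ = 1) (hv : ‖v‖ = 1) (huv : ⟪u, v⟫ = 0) :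
    Orthonormal ℝ ![u, v, cross u v] := by
  simp [orthonormal_vecCons_iff, hu, hv, huv, inner_self_cross, inner_cross_self,
    norm_cross_of_orthonormal hu hv huv]

lemma eq_add_cross_of_orthonormal {u v : E3} (hu : ‖u‖ = 1) (hv : ‖v‖ = 1) (huv : ⟪u, v⟫ = 0)
    (x : E3) : x = ⟪u, x⟫ • u + ⟪v, x⟫ • v + ⟪cross u v, x⟫ • cross u v := by
  have hsum := sum_inner_smul_of_orthonormal_of_card_eq_finrank (orthonormal_cross hu hv huv)
    (by simp) x
  simpa [Fin.sum_univ_three] using hsum.symm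

end E3

namespace Ruled

/-- The germ at `s` of a twice continuously differentiable, arc-length parametrized curve on the
unit sphere: the director curves of non-cylindrical ruled surfaces, near a fixed parameter. -/
structure UnitSpeedSphericalAt (v₀ : ℝ → E3) (s : ℝ) : Prop where
  contDiffAt : ContDiffAt ℝ 2 v₀ s
  norm_eq_one : ∀ᶠ u in 𝓝 s, ‖v₀ u‖ = 1
  norm_deriv_eq_one : ∀ᶠ u in 𝓝 s, ‖deriv v₀ u‖ = 1

namespace UnitSpeedSphericalAt

variable {v₀ : ℝ → E3} {s : ℝ}

lemma eventually (h : UnitSpeedSphericalAt v₀ s) : ∀ᶠ u in 𝓝 s, UnitSpeedSphericalAt v₀ u := by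
  filter_upwards [h.contDiffAt.eventually (by simp), h.norm_eq_one.eventually_nhds,
    h.norm_deriv_eq_one.eventually_nhds] with u hsmooth hunit harc
  exact ⟨hsmooth, hunit, harc⟩

lemma hasDerivAt (h : UnitSpeedSphericalAt v₀ s) : HasDerivAt v₀ (n₀ v₀ s) s :=
  (h.contDiffAt.differentiableAt two_ne_zero).hasDerivAt

lemma hasDerivAt_n₀ (h : UnitSpeedSphericalAt v₀ s) : HasDerivAt (n₀ v₀) (deriv (n₀ v₀) s) s :=
  ((h.contDiffAt.derivWithin one_add_one_eq_two.le).differentiableAt one_ne_zero).hasDerivAt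

lemma norm_n₀ (h : UnitSpeedSphericalAt v₀ s) : ‖n₀ v₀ s‖ = 1 :=
  h.norm_deriv_eq_one.self_of_nhds

lemma inner_v₀_n₀ (h : UnitSpeedSphericalAt v₀ s) : ⟪v₀ s, n₀ v₀ s⟫ = 0 :=
  inner_eq_zero_of_eventually_norm_eq_const h.hasDerivAt h.norm_eq_one

lemma inner_n₀_v₀ (h : UnitSpeedSphericalAt v₀ s) : ⟪n₀ v₀ s, v₀ s⟫ = 0 :=
  (real_inner_comm _ _).trans h.inner_v₀_n₀

lemma norm_t₀ (h : UnitSpeedSphericalAt v₀ s) : ‖t₀ v₀ s‖ = 1 :=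
  E3.norm_cross_of_orthonormal h.norm_eq_one.self_of_nhds h.norm_n₀ h.inner_v₀_n₀

lemma eq_frame_expansion (h : UnitSpeedSphericalAt v₀ s) (x : E3) :
    x = ⟪v₀ s, x⟫ • v₀ s + ⟪n₀ v₀ s, x⟫ • n₀ v₀ s + ⟪t₀ v₀ s, x⟫ • t₀ v₀ s :=
  E3.eq_add_cross_of_orthonormal h.norm_eq_one.self_of_nhds h.norm_n₀ h.inner_v₀_n₀ x

lemma deriv_n₀ (h : UnitSpeedSphericalAt v₀ s) :
    deriv (n₀ v₀) s = -v₀ s + τ₀ v₀ s • t₀ v₀ s := by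
  have hn : ⟪n₀ v₀ s, deriv (n₀ v₀) s⟫ = 0 :=
    inner_eq_zero_of_eventually_norm_eq_const h.hasDerivAt_n₀ h.norm_deriv_eq_one
  have hv : ⟪v₀ s, deriv (n₀ v₀) s⟫ = -1 := by
    have hsum := inner_add_inner_eq_zero_of_eventually_inner_eq_const h.hasDerivAt h.hasDerivAt_n₀
      (h.eventually.mono fun _ => inner_v₀_n₀)
    rw [real_inner_self_eq_norm_sq, h.norm_n₀] at hsum
    linarith
  have ht : ⟪t₀ v₀ s, deriv (n₀ v₀) s⟫ = τ₀ v₀ s := real_inner_comm _ _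
  simpa [hn, hv, ht] using h.eq_frame_expansion (deriv (n₀ v₀) s)

lemma hasDerivAt_t₀ (h : UnitSpeedSphericalAt v₀ s) :
    HasDerivAt (t₀ v₀) (-(τ₀ v₀ s • n₀ v₀ s)) s := by
  have hcross : cross (v₀ s) (deriv (n₀ v₀) s) = -(τ₀ v₀ s • n₀ v₀ s) := by
    rw [h.deriv_n₀, E3.isBilinearMap_cross.add_right, ← neg_one_smul ℝ,
      E3.isBilinearMap_cross.smul_right, E3.isBilinearMap_cross.smul_right, E3.cross_self,
      t₀, E3.cross_cross_right]
    simp [h.inner_v₀_n₀, h.norm_eq_one.self_of_nhds]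
  have ht₀ := E3.hasDerivAt_cross h.hasDerivAt h.hasDerivAt_n₀
  rwa [hcross, E3.cross_self, add_zero] at ht₀

end UnitSpeedSphericalAt

lemma inner_v₀_t₀ (v₀ : ℝ → E3) (s : ℝ) : ⟪v₀ s, t₀ v₀ s⟫ = 0 :=
  E3.inner_self_cross _ _

lemma inner_n₀_t₀ (v₀ : ℝ → E3) (s : ℝ) : ⟪n₀ v₀ s, t₀ v₀ s⟫ = 0 :=
  E3.inner_cross_self _ _

section BaseCurve

variable {v₀ v₁ : ℝ → E3} {s : ℝ}

lemma deriv_r (hv₀ : DifferentiableAt ℝ v₀ s) (hv₁ : DifferentiableAt ℝ v₁ s) :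
    deriv (r v₀ v₁) s = cross (v₀ s) (deriv v₁ s) + cross (n₀ v₀ s) (v₁ s) :=
  (E3.hasDerivAt_cross hv₀.hasDerivAt hv₁.hasDerivAt).deriv

lemma inner_v₀_deriv_r (hv₀ : DifferentiableAt ℝ v₀ s) (hv₁ : DifferentiableAt ℝ v₁ s) :
    ⟪v₀ s, deriv (r v₀ v₁) s⟫ = ⟪v₁ s, t₀ v₀ s⟫ := by
  rw [deriv_r hv₀ hv₁, inner_add_right, E3.inner_self_cross, zero_add, E3.inner_cross_rotate,
    E3.inner_cross_rotate, t₀]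

lemma inner_n₀_deriv_r (hv₀ : DifferentiableAt ℝ v₀ s) (hv₁ : DifferentiableAt ℝ v₁ s) :
    ⟪n₀ v₀ s, deriv (r v₀ v₁) s⟫ = -⟪deriv v₁ s, t₀ v₀ s⟫ := by
  rw [deriv_r hv₀ hv₁, inner_add_right, E3.inner_self_cross, add_zero, E3.inner_cross_rotate,
    E3.inner_cross_rotate, E3.cross_anticomm, inner_neg_right, t₀]

lemma inner_t₀_deriv_r (h : UnitSpeedSphericalAt v₀ s) (hv₁ : DifferentiableAt ℝ v₁ s)
    (horth : ⟪v₀ s, v₁ s⟫ = 0) : ⟪t₀ v₀ s, deriv (r v₀ v₁) s⟫ = κ₁ v₀ v₁ s := by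
  rw [deriv_r h.hasDerivAt.differentiableAt hv₁, inner_add_right, t₀, E3.inner_cross_cross,
    E3.inner_cross_cross, h.inner_v₀_n₀, h.inner_n₀_v₀, horth, real_inner_self_eq_norm_sq,
    h.norm_eq_one.self_of_nhds, κ₁, n₀]
  ring

lemma deriv_r_eq_frame_expansion (h : UnitSpeedSphericalAt v₀ s) (hv₁ : DifferentiableAt ℝ v₁ s)
    (horth : ⟪v₀ s, v₁ s⟫ = 0) :
    deriv (r v₀ v₁) s =
      ⟪v₁ s, t₀ v₀ s⟫ • v₀ s - ⟪deriv v₁ s, t₀ v₀ s⟫ • n₀ v₀ s + κ₁ v₀ v₁ s • t₀ v₀ s := by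
  have hv₀ := h.hasDerivAt.differentiableAt
  rw [h.eq_frame_expansion (deriv (r v₀ v₁) s), inner_v₀_deriv_r hv₀ hv₁, inner_n₀_deriv_r hv₀ hv₁,
    inner_t₀_deriv_r h hv₁ horth, neg_smul, ← sub_eq_add_neg]

end BaseCurve

section StrictionCurve

variable {v₀ v₁ : ℝ → E3} {s : ℝ}

lemma strict_apply (hv₀ : DifferentiableAt ℝ v₀ s) (hv₁ : DifferentiableAt ℝ v₁ s) :
    strict v₀ v₁ s = r v₀ v₁ s + ⟪deriv v₁ s, t₀ v₀ s⟫ • v₀ s := by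
  have hinner : ⟪deriv (r v₀ v₁) s, deriv (e v₀) s⟫ = -⟪deriv v₁ s, t₀ v₀ s⟫ :=
    (real_inner_comm _ _).trans (inner_n₀_deriv_r hv₀ hv₁)
  rw [strict, hinner, neg_smul, sub_neg_eq_add, e]

lemma contDiffAt_strict {n : WithTop ℕ∞} (hv₀ : ContDiffAt ℝ (n + 1) v₀ s)
    (hv₁ : ContDiffAt ℝ (n + 1) v₁ s) : ContDiffAt ℝ n (strict v₀ v₁) s := by
  have hr : ContDiffAt ℝ (n + 1) (r v₀ v₁) s := E3.contDiffAt_cross hv₀ hv₁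
  have hcoeff := (hr.derivWithin le_rfl).inner ℝ (hv₀.derivWithin le_rfl)
  exact (hr.of_le le_self_add).sub (hcoeff.smul (hv₀.of_le le_self_add))

lemma hasDerivAt_inner_deriv_t₀ (h : UnitSpeedSphericalAt v₀ s)
    (hv₁ : DifferentiableAt ℝ (deriv v₁) s) :
    HasDerivAt (fun u => ⟪deriv v₁ u, t₀ v₀ u⟫)
      (⟪deriv (deriv v₁) s, t₀ v₀ s⟫ - τ₀ v₀ s * κ₁ v₀ v₁ s) s := by
  have hκ₁ : ⟪deriv v₁ s, n₀ v₀ s⟫ = κ₁ v₀ v₁ s := real_inner_comm _ _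
  have hinner := hv₁.hasDerivAt.inner ℝ h.hasDerivAt_t₀
  rwa [inner_neg_right, real_inner_smul_right, hκ₁, neg_add_eq_sub] at hinner

lemma inner_deriv_n₁_t₀ (hn₀ : DifferentiableAt ℝ (n₀ v₀) s)
    (hv₁ : DifferentiableAt ℝ (deriv v₁) s) :
    ⟪deriv (n₁ v₀ v₁) s, t₀ v₀ s⟫ =
      ⟪deriv (deriv v₁) s, t₀ v₀ s⟫ - τ₀ v₀ s * κ₁ v₀ v₁ s := by
  have hκ₁ := hn₀.hasDerivAt.inner ℝ hv₁.hasDerivAt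
  have hn₁ : HasDerivAt (n₁ v₀ v₁) _ s := hv₁.hasDerivAt.sub (hκ₁.smul hn₀.hasDerivAt)
  have hn₀t₀ : ⟪deriv v₀ s, t₀ v₀ s⟫ = 0 := inner_n₀_t₀ v₀ s
  rw [hn₁.deriv, inner_sub_left, inner_add_left, real_inner_smul_left, real_inner_smul_left,
    hn₀t₀, τ₀, κ₁, n₀]
  ring

lemma inner_deriv_n₀_t₁ (h : UnitSpeedSphericalAt v₀ s) (horth : ⟪v₀ s, v₁ s⟫ = 0) :
    ⟪deriv (n₀ v₀) s, t₁ v₀ v₁ s⟫ = ⟪v₁ s, t₀ v₀ s⟫ := by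
  have hv : ⟪v₀ s, t₁ v₀ v₁ s⟫ = -⟪v₁ s, t₀ v₀ s⟫ := by
    rw [t₁, inner_add_right, E3.inner_self_cross, zero_add, E3.inner_cross_rotate,
      E3.cross_anticomm, inner_neg_right, t₀]
  have hn₁ : ⟪n₀ v₀ s, n₁ v₀ v₁ s⟫ = 0 := by
    change ⟪n₀ v₀ s, deriv v₁ s - κ₁ v₀ v₁ s • n₀ v₀ s⟫ = 0
    rw [inner_sub_right, real_inner_smul_right, real_inner_self_eq_norm_sq, h.norm_n₀, κ₁, n₀]
    ring
  have ht : ⟪t₀ v₀ s, t₁ v₀ v₁ s⟫ = 0 := by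
    rw [t₁, inner_add_right, t₀, E3.inner_cross_cross, E3.inner_cross_cross, hn₁, horth,
      h.inner_n₀_v₀, h.inner_v₀_n₀]
    ring
  rw [h.deriv_n₀, inner_add_left, inner_neg_left, real_inner_smul_left, hv, ht]
  ring

lemma τ₁_eq (h : UnitSpeedSphericalAt v₀ s) (hv₁ : DifferentiableAt ℝ (deriv v₁) s)
    (horth : ⟪v₀ s, v₁ s⟫ = 0) :
    τ₁ v₀ v₁ s =
      ⟪v₁ s, t₀ v₀ s⟫ + (⟪deriv (deriv v₁) s, t₀ v₀ s⟫ - τ₀ v₀ s * κ₁ v₀ v₁ s) := by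
  rw [τ₁, inner_deriv_n₀_t₁ h horth, inner_deriv_n₁_t₀ h.hasDerivAt_n₀.differentiableAt hv₁]

theorem deriv_strict (h : UnitSpeedSphericalAt v₀ s) (hv₁ : ContDiffAt ℝ 2 v₁ s)
    (horth : ⟪v₀ s, v₁ s⟫ = 0) :
    deriv (strict v₀ v₁) s = τ₁ v₀ v₁ s • v₀ s + κ₁ v₀ v₁ s • t₀ v₀ s := by
  have hdiff : DifferentiableAt ℝ v₁ s := hv₁.differentiableAt two_ne_zero
  have hdiff' : DifferentiableAt ℝ (deriv v₁) s :=
    (hv₁.derivWithin one_add_one_eq_two.le).differentiableAt one_ne_zero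
  have hr := (E3.hasDerivAt_cross h.hasDerivAt hdiff.hasDerivAt).differentiableAt.hasDerivAt
  have hσ := hr.add ((hasDerivAt_inner_deriv_t₀ h hdiff').smul h.hasDerivAt)
  have hstrict : strict v₀ v₁ =ᶠ[𝓝 s] fun u => r v₀ v₁ u + ⟪deriv v₁ u, t₀ v₀ u⟫ • v₀ u := by
    filter_upwards [h.eventually, hv₁.eventually (by simp)] with u hu hv₁u
    exact strict_apply hu.hasDerivAt.differentiableAt (hv₁u.differentiableAt two_ne_zero)
  calc deriv (strict v₀ v₁) s
      = deriv (r v₀ v₁) s + (⟪deriv v₁ s, t₀ v₀ s⟫ • n₀ v₀ s +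
          (⟪deriv (deriv v₁) s, t₀ v₀ s⟫ - τ₀ v₀ s * κ₁ v₀ v₁ s) • v₀ s) :=
        (hσ.congr_of_eventuallyEq hstrict).deriv
    _ = τ₁ v₀ v₁ s • v₀ s + κ₁ v₀ v₁ s • t₀ v₀ s := by
        rw [deriv_r_eq_frame_expansion h hdiff horth, τ₁_eq h hdiff' horth]
        module

theorem frame_components_deriv_strict (h : UnitSpeedSphericalAt v₀ s) (hv₁ : ContDiffAt ℝ 2 v₁ s)
    (horth : ⟪v₀ s, v₁ s⟫ = 0) :
    ⟪deriv (strict v₀ v₁) s, v₀ s⟫ = τ₁ v₀ v₁ s ∧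
    ⟪deriv (strict v₀ v₁) s, n₀ v₀ s⟫ = 0 ∧
    ⟪deriv (strict v₀ v₁) s, t₀ v₀ s⟫ = κ₁ v₀ v₁ s := by
  have htv : ⟪t₀ v₀ s, v₀ s⟫ = 0 := (real_inner_comm _ _).trans (inner_v₀_t₀ v₀ s)
  have htn : ⟪t₀ v₀ s, n₀ v₀ s⟫ = 0 := (real_inner_comm _ _).trans (inner_n₀_t₀ v₀ s)
  simp [deriv_strict h hv₁ horth, inner_add_left, real_inner_smul_left, h.inner_v₀_n₀, inner_v₀_t₀,
    htv, htn, h.norm_eq_one.self_of_nhds, h.norm_t₀]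

end StrictionCurve

theorem frame_components_deriv {v₀ γ : ℝ → E3} {s : ℝ} (h : UnitSpeedSphericalAt v₀ s)
    (hγ : DifferentiableAt ℝ γ s) :
    ⟪deriv γ s, v₀ s⟫ = deriv (fun u => ⟪γ u, v₀ u⟫) s - ⟪γ s, n₀ v₀ s⟫ ∧
    ⟪deriv γ s, n₀ v₀ s⟫ =
      deriv (fun u => ⟪γ u, n₀ v₀ u⟫) s + ⟪γ s, v₀ s⟫ - τ₀ v₀ s * ⟪γ s, t₀ v₀ s⟫ ∧
    ⟪deriv γ s, t₀ v₀ s⟫ =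
      deriv (fun u => ⟪γ u, t₀ v₀ u⟫) s + τ₀ v₀ s * ⟪γ s, n₀ v₀ s⟫ := by
  refine ⟨inner_deriv_left_eq_deriv_inner_sub hγ h.hasDerivAt, ?_, ?_⟩
  · rw [inner_deriv_left_eq_deriv_inner_sub hγ h.hasDerivAt_n₀, h.deriv_n₀, inner_add_right,
      inner_neg_right, real_inner_smul_right]
    ring
  · rw [inner_deriv_left_eq_deriv_inner_sub hγ h.hasDerivAt_t₀, inner_neg_right,
      real_inner_smul_right, sub_neg_eq_add]

end Ruled

theorem striction_frame_recursion_general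
    (I : Set ℝ) (v₀ v₁ : ℝ → E3) (hI : IsOpen I)
    (hv₀ : ContDiffOn ℝ (⊤ : ℕ∞) v₀ I) (hv₁ : ContDiffOn ℝ (⊤ : ℕ∞) v₁ I)
    (hunit : ∀ s ∈ I, ‖v₀ s‖ = 1) (horth : ∀ s ∈ I, ⟪v₀ s, v₁ s⟫ = 0)
    (harc : ∀ s ∈ I, ‖deriv v₀ s‖ = 1) :
    (∀ s ∈ I,
      ⟪iteratedDeriv 1 (strict v₀ v₁) s, v₀ s⟫ = τ₁ v₀ v₁ s ∧
      ⟪iteratedDeriv 1 (strict v₀ v₁) s, n₀ v₀ s⟫ = 0 ∧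
      ⟪iteratedDeriv 1 (strict v₀ v₁) s, t₀ v₀ s⟫ = κ₁ v₀ v₁ s) ∧
    ∀ k : ℕ, ∀ s ∈ I,
      ⟪iteratedDeriv (k + 1) (strict v₀ v₁) s, v₀ s⟫ =
        deriv (fun u => ⟪iteratedDeriv k (strict v₀ v₁) u, v₀ u⟫) s -
          ⟪iteratedDeriv k (strict v₀ v₁) s, n₀ v₀ s⟫ ∧
      ⟪iteratedDeriv (k + 1) (strict v₀ v₁) s, n₀ v₀ s⟫ =
        deriv (fun u => ⟪iteratedDeriv k (strict v₀ v₁) u, n₀ v₀ u⟫) s +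
          ⟪iteratedDeriv k (strict v₀ v₁) s, v₀ s⟫ -
          τ₀ v₀ s * ⟪iteratedDeriv k (strict v₀ v₁) s, t₀ v₀ s⟫ ∧
      ⟪iteratedDeriv (k + 1) (strict v₀ v₁) s, t₀ v₀ s⟫ =
        deriv (fun u => ⟪iteratedDeriv k (strict v₀ v₁) u, t₀ v₀ u⟫) s +
          τ₀ v₀ s * ⟪iteratedDeriv k (strict v₀ v₁) s, n₀ v₀ s⟫ := by
  have hsmooth₀ {s} (hs : s ∈ I) := hv₀.contDiffAt (hI.mem_nhds hs)
  have hsmooth₁ {s} (hs : s ∈ I) := hv₁.contDiffAt (hI.mem_nhds hs)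
  have hframe {s} (hs : s ∈ I) : UnitSpeedSphericalAt v₀ s :=
    ⟨mod_cast contDiffAt_infty.mp (hsmooth₀ hs) 2, (hI.eventually_mem hs).mono hunit,
      (hI.eventually_mem hs).mono harc⟩
  refine ⟨fun s hs => ?_, fun k s hs => ?_⟩
  · rw [iteratedDeriv_one]
    exact frame_components_deriv_strict (hframe hs) (mod_cast contDiffAt_infty.mp (hsmooth₁ hs) 2)
      (horth s hs)
  · rw [iteratedDeriv_succ]
    have hσ : ContDiffAt ℝ (⊤ : ℕ∞) (strict v₀ v₁) s :=
      contDiffAt_strict (hsmooth₀ hs) (hsmooth₁ hs)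
    exact frame_components_deriv (hframe hs)
      (differentiableAt_iteratedDeriv_of_contDiffAt hσ (mod_cast ENat.natCast_lt_top k))

/-- In the developable case, the frame components `A_k = ⟪σ⁽ᵏ⁾, v₀⟫`, `B_k = ⟪σ⁽ᵏ⁾, n₀⟫`,
`C_k = ⟪σ⁽ᵏ⁾, t₀⟫` of the derivatives of the striction curve satisfy `A₁ = τ₁`,
`B₁ = C₁ = 0` and the Frenet recursion. -/
theorem striction_frame_recursion
    (I : Set ℝ) (v₀ v₁ : ℝ → E3)
    (hI : IsOpen I) (hI' : I.OrdConnected)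
    (hv₀ : ContDiffOn ℝ (⊤ : ℕ∞) v₀ I) (hv₁ : ContDiffOn ℝ (⊤ : ℕ∞) v₁ I)
    (hunit : ∀ s ∈ I, ‖v₀ s‖ = 1) (horth : ∀ s ∈ I, ⟪v₀ s, v₁ s⟫ = 0)
    (harc : ∀ s ∈ I, ‖deriv v₀ s‖ = 1)
    (hdev : ∀ s ∈ I, κ₁ v₀ v₁ s = 0) :
    (∀ s ∈ I,
      ⟪iteratedDeriv 1 (strict v₀ v₁) s, v₀ s⟫ = τ₁ v₀ v₁ s ∧
      ⟪iteratedDeriv 1 (strict v₀ v₁) s, n₀ v₀ s⟫ = 0 ∧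
      ⟪iteratedDeriv 1 (strict v₀ v₁) s, t₀ v₀ s⟫ = 0) ∧
    ∀ k : ℕ, 1 ≤ k → ∀ s ∈ I,
      ⟪iteratedDeriv (k + 1) (strict v₀ v₁) s, v₀ s⟫ =
        deriv (fun u => ⟪iteratedDeriv k (strict v₀ v₁) u, v₀ u⟫) s -
          ⟪iteratedDeriv k (strict v₀ v₁) s, n₀ v₀ s⟫ ∧
      ⟪iteratedDeriv (k + 1) (strict v₀ v₁) s, n₀ v₀ s⟫ =
        deriv (fun u => ⟪iteratedDeriv k (strict v₀ v₁) u, n₀ v₀ u⟫) s +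
          ⟪iteratedDeriv k (strict v₀ v₁) s, v₀ s⟫ -
          τ₀ v₀ s * ⟪iteratedDeriv k (strict v₀ v₁) s, t₀ v₀ s⟫ ∧
      ⟪iteratedDeriv (k + 1) (strict v₀ v₁) s, t₀ v₀ s⟫ =
        deriv (fun u => ⟪iteratedDeriv k (strict v₀ v₁) u, t₀ v₀ u⟫) s +
          τ₀ v₀ s * ⟪iteratedDeriv k (strict v₀ v₁) s, n₀ v₀ s⟫ := by
  obtain ⟨initial, recursion⟩ :=
    striction_frame_recursion_general I v₀ v₁ hI hv₀ hv₁ hunit horth harc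
  exact ⟨fun s hs => hdev s hs ▸ initial s hs, fun k _ => recursion k⟩
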